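/- Let φ be an automorphism of the unit ball B_N, let a = φ^{-1}(0), and let f be a bounded measurable function on ∂B_N. Then on H^2(B_N) one has the operator identity C_φ T_f = T_{1/K_a} T_{f∘φ} T_{K_a} C_φ, where K_a(z) = (1−⟨z,a⟩)^{−N} is the Hardy space reproducing kernel at a (so K_a and 1/K_a are holomorphic on \overline{B_N} and bounded there). -/

import Mathlib

open Filter MeasureTheory Metric Set
open scoped ComplexInnerProductSpace Topology

noncomputable section

/-- Borel measurable structure on `ℂ^N`. -/
instance (N : ℕ) : MeasurableSpace (EuclideanSpace ℂ (Fin N)) := borel _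

instance (N : ℕ) : BorelSpace (EuclideanSpace ℂ (Fin N)) := ⟨rfl⟩

/-- The open unit ball `B_N` of `ℂ^N`. -/
abbrev Ball (N : ℕ) : Set (EuclideanSpace ℂ (Fin N)) := Metric.ball 0 1

/-- The normalized volume measure `v` on the unit ball of `ℂ^N`. -/
def ballMeasure (N : ℕ) : Measure (EuclideanSpace ℂ (Fin N)) :=
  (volume (Ball N))⁻¹ • volume.restrict (Ball N)

/-- The normalized surface measure `σ` on the unit sphere `∂B_N`, realized as a measure on
`ℂ^N` (supported on the sphere): it is the push-forward of the normalized volume measure of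
the ball under the radial projection `z ↦ z/‖z‖`. -/
def sphereMeasure (N : ℕ) : Measure (EuclideanSpace ℂ (Fin N)) :=
  Measure.map (fun z => ‖z‖⁻¹ • z) (ballMeasure N)

/-- The weighted measure `dv_s(z) = (Γ(N+s+1)/(N! Γ(s+1))) (1-|z|²)^s dv(z)` defining the
weighted Bergman space `A²_s(B_N)`. -/
def bergmanMeasure (N : ℕ) (s : ℝ) : Measure (EuclideanSpace ℂ (Fin N)) :=
  (ballMeasure N).withDensity fun z =>
    ENNReal.ofReal (Real.Gamma (N + s + 1) / (Nat.factorial N * Real.Gamma (s + 1))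
      * (1 - ‖z‖ ^ 2) ^ s)

/-- An abstract presentation of the Hardy space `H²(B_N)` (for `t = N`, `μ` the normalized
surface measure on the sphere) or of the weighted Bergman space `A²_s(B_N)` (for
`t = N + s + 1`, `μ` the weighted volume measure `dv_s`): a reproducing-kernel Hilbert space
of holomorphic functions on `B_N` with kernel `K_w(z) = (1 - ⟨z,w⟩)^{-t}`, whose inner
product is computed by the (dilated) integral pairing against `μ`. -/
structure BallFunctionSpace (N : ℕ) (t : ℝ) (μ : Measure (EuclideanSpace ℂ (Fin N))) where
  (H : Type)
  [grp : NormedAddCommGroup H]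
  [ips : InnerProductSpace ℂ H]
  [cpl : CompleteSpace H]
  eval : H → EuclideanSpace ℂ (Fin N) → ℂ
  eval_add : ∀ f g : H, ∀ z, eval (f + g) z = eval f z + eval g z
  eval_smul : ∀ (c : ℂ) (f : H) (z : EuclideanSpace ℂ (Fin N)), eval (c • f) z = c * eval f z
  holo : ∀ f : H, DifferentiableOn ℂ (eval f) (Ball N)
  eval_injective : ∀ f g : H, (∀ z ∈ Ball N, eval f z = eval g z) → f = g
  kernel : EuclideanSpace ℂ (Fin N) → H
  eval_kernel : ∀ w ∈ Ball N, ∀ z ∈ Ball N, eval (kernel w) z = (1 - ⟪w, z⟫) ^ (-(t : ℂ))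
  reproducing : ∀ (f : H), ∀ w ∈ Ball N, ⟪kernel w, f⟫ = eval f w
  inner_eq : ∀ f g : H,
    Tendsto (fun r : ℝ => ∫ z, (starRingEnd ℂ) (eval f (r • z)) * eval g (r • z) ∂μ)
      (𝓝[<] (1 : ℝ)) (𝓝 ⟪f, g⟫)

attribute [instance] BallFunctionSpace.grp BallFunctionSpace.ips BallFunctionSpace.cpl

/-- `T` is the composition operator `C_φ : f ↦ f ∘ φ` on `S`. -/
def BallFunctionSpace.IsCompositionOperator {N : ℕ} {t : ℝ}
    {μ : Measure (EuclideanSpace ℂ (Fin N))} (S : BallFunctionSpace N t μ)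
    (φ : EuclideanSpace ℂ (Fin N) → EuclideanSpace ℂ (Fin N)) (T : S.H →L[ℂ] S.H) : Prop :=
  ∀ f : S.H, ∀ z ∈ Ball N, S.eval (T f) z = S.eval f (φ z)

/-- `T` is the Toeplitz operator `T_b : u ↦ P(b·u)` with symbol `b` on `S`;  equivalently,
`⟪v, T u⟫ = lim_{r→1⁻} ∫ conj(v(rz)) b(z) u(rz) dμ(z)` for all `u, v ∈ S`. -/
def BallFunctionSpace.IsToeplitzOperator {N : ℕ} {t : ℝ}
    {μ : Measure (EuclideanSpace ℂ (Fin N))} (S : BallFunctionSpace N t μ)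
    (b : EuclideanSpace ℂ (Fin N) → ℂ) (T : S.H →L[ℂ] S.H) : Prop :=
  ∀ u v : S.H,
    Tendsto (fun r : ℝ => ∫ z, (starRingEnd ℂ) (S.eval v (r • z)) * b z * S.eval u (r • z) ∂μ)
      (𝓝[<] (1 : ℝ)) (𝓝 ⟪v, T u⟫)

/-- `φ` is an automorphism (biholomorphic self-map) of the unit ball `B_N`. -/
def IsBallAutomorphism (N : ℕ) (φ : EuclideanSpace ℂ (Fin N) → EuclideanSpace ℂ (Fin N)) : Prop :=
  DifferentiableOn ℂ φ (Ball N) ∧ Set.MapsTo φ (Ball N) (Ball N) ∧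
    ∃ ψ : EuclideanSpace ℂ (Fin N) → EuclideanSpace ℂ (Fin N),
      DifferentiableOn ℂ ψ (Ball N) ∧ Set.MapsTo ψ (Ball N) (Ball N) ∧
      (∀ z ∈ Ball N, ψ (φ z) = z) ∧ (∀ z ∈ Ball N, φ (ψ z) = z)

/-!
Composing `φ` with a Möbius involution gives an automorphism fixing `0`, which by the Schwarz lemma
preserves inner products. Hence, with `a = φ⁻¹ 0`,
`(1 - ⟨φ w, φ z⟩) (1 - ⟨w, a⟩) (1 - ⟨a, z⟩) = (1 - |a|²) (1 - ⟨w, z⟩)`,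
so that `(K_{φ u} ∘ φ) K_a` is a constant multiple of `K_u`. A finite measure on the closed ball is
determined by its pairings with kernels, and this identity therefore also shows that `φ` changes
variables in `σ` with density `|K_a|² / K_a(a)`. The two facts together give the operator identity
when both sides are paired with `K_{φ u}`, and the kernels span a dense subspace.
-/

section Geometry

lemma one_add_sqrt_ne_zero (x : ℝ) : (1 + √x : ℂ) ≠ 0 := by
  have : 1 + √x ≠ 0 := by positivity
  exact_mod_cast this

variable {E : Type*} [NormedAddCommGroup E] [InnerProductSpace ℂ E] {a w z : E}

lemma re_one_sub_inner_pos (hw : ‖w‖ < 1) (hz : ‖z‖ ≤ 1) : 0 < (1 - ⟪w, z⟫).re := by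
  have hinner : ‖⟪w, z⟫‖ < 1 :=
    (norm_inner_le_norm w z).trans_lt (mul_lt_one_of_nonneg_of_lt_one_left (norm_nonneg w) hw hz)
  simpa using (Complex.re_le_norm _).trans_lt hinner

lemma one_sub_inner_ne_zero (hw : ‖w‖ < 1) (hz : ‖z‖ ≤ 1) : 1 - ⟪w, z⟫ ≠ 0 :=
  Complex.ne_zero_of_re_pos (re_one_sub_inner_pos hw hz)

lemma one_sub_inner_self (a : E) : 1 - ⟪a, a⟫ = ((1 - ‖a‖ ^ 2 : ℝ) : ℂ) := by
  rw [inner_self_eq_norm_sq_to_K]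
  push_cast
  rfl

lemma sq_sqrt_one_sub_norm_sq (ha : ‖a‖ ≤ 1) : (√(1 - ‖a‖ ^ 2) : ℂ) ^ 2 = 1 - ⟪a, a⟫ := by
  rw [one_sub_inner_self, ← Complex.ofReal_pow, Real.sq_sqrt]
  nlinarith [norm_nonneg a]

/-- The Möbius involution `φ_a(z) = (a - P_a z - s (z - P_a z)) / (1 - ⟨z, a⟩)` of the unit ball,
where `s = √(1 - ‖a‖²)` and `P_a z = ⟨z, a⟩ a / ‖a‖²`. Since `(1 - s) / ‖a‖² = 1 / (1 + s)`, the
projection can be eliminated, so that the formula also covers `a = 0`. -/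
def moebiusInvolution (a z : E) : E :=
  (1 - ⟪a, z⟫)⁻¹ • ((1 - ⟪a, z⟫ / (1 + √(1 - ‖a‖ ^ 2))) • a - (√(1 - ‖a‖ ^ 2) : ℂ) • z)

lemma moebiusInvolution_zero (a : E) : moebiusInvolution a 0 = a := by
  simp [moebiusInvolution]

lemma one_sub_inner_moebiusInvolution_mul (ha : ‖a‖ < 1) (hw : ‖w‖ ≤ 1) (hz : ‖z‖ ≤ 1) :
    (1 - ⟪moebiusInvolution a w, moebiusInvolution a z⟫) * ((1 - ⟪w, a⟫) * (1 - ⟪a, z⟫)) =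
      (1 - ⟪a, a⟫) * (1 - ⟪w, z⟫) := by
  have haz := one_sub_inner_ne_zero ha hz
  have hwa : 1 - ⟪w, a⟫ ≠ 0 := by
    simpa using (map_ne_zero (starRingEnd ℂ)).mpr (one_sub_inner_ne_zero ha hw)
  have hs := one_add_sqrt_ne_zero (1 - ‖a‖ ^ 2)
  have haa : ⟪a, a⟫ = (1 - √(1 - ‖a‖ ^ 2)) * (1 + √(1 - ‖a‖ ^ 2)) := by
    linear_combination sq_sqrt_one_sub_norm_sq ha.le
  simp only [moebiusInvolution, inner_sub_right, inner_smul_right, inner_sub_left, inner_smul_left,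
    haa, map_sub, map_div₀, map_one, map_add, map_inv₀, Complex.conj_ofReal, inner_conj_symm]
  field_simp
  ring

lemma one_sub_inner_self_moebiusInvolution_mul (ha : ‖a‖ < 1) (hz : ‖z‖ ≤ 1) :
    (1 - ⟪a, moebiusInvolution a z⟫) * (1 - ⟪a, z⟫) = 1 - ⟪a, a⟫ := by
  simpa [moebiusInvolution_zero] using
    one_sub_inner_moebiusInvolution_mul (w := 0) ha (by simp) hz

lemma moebiusInvolution_moebiusInvolution (ha : ‖a‖ < 1) (hz : ‖z‖ ≤ 1) :
    moebiusInvolution a (moebiusInvolution a z) = z := by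
  have haz := one_sub_inner_ne_zero ha hz
  have hs := one_add_sqrt_ne_zero (1 - ‖a‖ ^ 2)
  have hsq := sq_sqrt_one_sub_norm_sq ha.le
  have hs0 : (√(1 - ‖a‖ ^ 2) : ℂ) ≠ 0 := by
    rw [← pow_ne_zero_iff two_ne_zero, hsq]
    exact one_sub_inner_ne_zero ha ha.le
  have hinner : 1 - ⟪a, moebiusInvolution a z⟫ = (√(1 - ‖a‖ ^ 2) : ℂ) ^ 2 / (1 - ⟪a, z⟫) := by
    rw [eq_div_iff haz, one_sub_inner_self_moebiusInvolution_mul ha hz, hsq]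
  rw [moebiusInvolution, hinner, eq_sub_of_add_eq' (sub_eq_iff_eq_add.mp hinner).symm,
    moebiusInvolution]
  match_scalars
  · field_simp
    ring
  · field_simp

lemma norm_moebiusInvolution_lt_one (ha : ‖a‖ < 1) (hz : ‖z‖ < 1) :
    ‖moebiusInvolution a z‖ < 1 := by
  have hconj : (1 - ⟪z, a⟫) * (1 - ⟪a, z⟫) = ((‖1 - ⟪a, z⟫‖ ^ 2 : ℝ) : ℂ) := by
    simpa using Complex.conj_mul' (1 - ⟪a, z⟫)
  have hid : (1 - ‖moebiusInvolution a z‖ ^ 2) * ‖1 - ⟪a, z⟫‖ ^ 2 =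
      (1 - ‖a‖ ^ 2) * (1 - ‖z‖ ^ 2) := by
    have := one_sub_inner_moebiusInvolution_mul ha hz.le hz.le
    rw [hconj, one_sub_inner_self, one_sub_inner_self, one_sub_inner_self] at this
    exact_mod_cast this
  have hpos : 0 < (1 - ‖moebiusInvolution a z‖ ^ 2) * ‖1 - ⟪a, z⟫‖ ^ 2 := by
    rw [hid]
    exact mul_pos (by nlinarith [norm_nonneg a]) (by nlinarith [norm_nonneg z])
  nlinarith [pos_of_mul_pos_left hpos (sq_nonneg _), norm_nonneg (moebiusInvolution a z)]

lemma mapsTo_moebiusInvolution (ha : ‖a‖ < 1) :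
    MapsTo (moebiusInvolution a) (ball 0 1) (ball 0 1) := fun z hz => by
  rw [mem_ball_zero_iff] at hz ⊢
  exact norm_moebiusInvolution_lt_one ha hz

lemma differentiableOn_moebiusInvolution (ha : ‖a‖ < 1) :
    DifferentiableOn ℂ (moebiusInvolution a) (ball 0 1) := by
  have hinner : Differentiable ℂ fun z => ⟪a, z⟫ := (innerSL ℂ a).differentiable
  refine DifferentiableOn.smul (DifferentiableOn.inv (by fun_prop) fun z hz => ?_)
    (Differentiable.differentiableOn (by fun_prop))
  exact one_sub_inner_ne_zero ha (mem_ball_zero_iff.mp hz).le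

section Cartan

variable {F : Type*} [NormedAddCommGroup F] [NormedSpace ℂ F]

lemma norm_map_eq_of_map_zero_of_leftInvOn {Φ Ψ : F → F}
    (hΦ : DifferentiableOn ℂ Φ (ball 0 1)) (hΨ : DifferentiableOn ℂ Ψ (ball 0 1))
    (mΦ : MapsTo Φ (ball 0 1) (ball 0 1)) (mΨ : MapsTo Ψ (ball 0 1) (ball 0 1))
    (hΦ0 : Φ 0 = 0) (hinv : LeftInvOn Ψ Φ (ball 0 1)) {z : F} (hz : ‖z‖ < 1) : ‖Φ z‖ = ‖z‖ := by
  have hz' : z ∈ ball (0 : F) 1 := mem_ball_zero_iff.mpr hz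
  have hΨ0 : Ψ 0 = 0 := by simpa [hΦ0] using hinv (mem_ball_self one_pos)
  refine (Complex.norm_le_norm_of_mapsTo_ball hΦ
    (mΦ.mono_right ball_subset_closedBall) hΦ0 hz).antisymm ?_
  simpa [hinv hz'] using Complex.norm_le_norm_of_mapsTo_ball hΨ
    (mΨ.mono_right ball_subset_closedBall) hΨ0 (mem_ball_zero_iff.mp (mΦ hz'))

/-- Along the complex line through `z`, the Schwarz lemma holds with equality. -/
lemma fderiv_zero_apply_eq_of_norm_map_eq {F' : Type*} [NormedAddCommGroup F'] [NormedSpace ℂ F']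
    [StrictConvexSpace ℝ F'] {Φ : F → F'} (hΦ : DifferentiableOn ℂ Φ (ball 0 1))
    (hnorm : ∀ z, ‖z‖ < 1 → ‖Φ z‖ = ‖z‖) {z : F} (hz : ‖z‖ < 1) : fderiv ℂ Φ 0 z = Φ z := by
  have hΦ0 : Φ 0 = 0 := by simpa using hnorm 0 (by simp)
  rcases eq_or_ne z 0 with rfl | hz0
  · simp [hΦ0]
  have hz0' : 0 < ‖z‖ := norm_pos_iff.mpr hz0
  have mline : MapsTo (fun c : ℂ => c • z) (ball 0 ‖z‖⁻¹) (ball 0 1) := fun c hc => by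
    rw [mem_ball_zero_iff] at hc ⊢
    rw [norm_smul]
    exact (lt_inv_mul_iff₀' hz0').mp (by simpa using hc)
  have hline : EqOn (fun c : ℂ => Φ (c • z)) (fun c => c • Φ z) (ball 0 ‖z‖⁻¹) := by
    have hone : (1 : ℂ) ∈ ball (0 : ℂ) ‖z‖⁻¹ := by simpa using (one_lt_inv₀ hz0').mpr hz
    have hslope : dslope (Φ ∘ fun c : ℂ => c • z) 0 1 = Φ z := by
      simp [dslope_of_ne, slope_def_module, hΦ0]
    have haffine := Complex.affine_of_mapsTo_ball_of_norm_dslope_eq_div (R₂ := 1)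
      (hΦ.comp (by fun_prop) mline) (fun c hc => ?_) hone ?_
    · rw [hslope] at haffine
      simpa [hΦ0, Function.comp_def] using haffine
    · have hc' := mem_ball_zero_iff.mp (mline hc)
      simpa [hΦ0] using (hnorm _ hc').trans_le hc'.le
    · simp [hslope, hnorm z hz]
  have hderiv : HasDerivAt (fun c : ℂ => Φ (c • z)) (fderiv ℂ Φ 0 z) 0 := by
    have hfderiv : HasFDerivAt Φ (fderiv ℂ Φ 0) ((0 : ℂ) • z) := by
      simpa using (hΦ.differentiableAt (ball_mem_nhds 0 one_pos)).hasFDerivAt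
    simpa [Function.comp_def] using
      hfderiv.comp_hasDerivAt (0 : ℂ) ((hasDerivAt_id (0 : ℂ)).smul_const z)
  refine hderiv.unique (HasDerivAt.congr_of_eventuallyEq ?_
    (hline.eventuallyEq_of_mem (ball_mem_nhds 0 (inv_pos.mpr hz0'))))
  simpa using (hasDerivAt_id (0 : ℂ)).smul_const (Φ z)

lemma inner_map_map_eq_of_norm_map_eq {F' : Type*} [NormedAddCommGroup F']
    [InnerProductSpace ℂ F'] {Φ : E → F'} (hΦ : DifferentiableOn ℂ Φ (ball 0 1))
    (hnorm : ∀ z, ‖z‖ < 1 → ‖Φ z‖ = ‖z‖) (hw : ‖w‖ < 1) (hz : ‖z‖ < 1) :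
    ⟪Φ w, Φ z⟫ = ⟪w, z⟫ := by
  have : UniformConvexSpace F' :=
    @InnerProductSpace.toUniformConvexSpace F' _ InnerProductSpace.complexToReal
  have hL {u : E} (hu : ‖u‖ < 1) := fderiv_zero_apply_eq_of_norm_map_eq hΦ hnorm hu
  have hLnorm (v : E) : ‖fderiv ℂ Φ 0 v‖ = ‖v‖ := by
    have hc : ‖(‖v‖ + 1 : ℂ)‖ = ‖v‖ + 1 := by
      exact_mod_cast Complex.norm_of_nonneg (add_nonneg (norm_nonneg v) one_pos.le)
    have hv : ‖(‖v‖ + 1 : ℂ)⁻¹ • v‖ < 1 := by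
      rw [norm_smul, norm_inv, hc, inv_mul_lt_one₀ (by positivity)]
      exact lt_add_one _
    have hscaled := hnorm _ hv
    rwa [← hL hv, map_smul, norm_smul, norm_smul, mul_right_inj' (by rw [norm_inv, hc]; positivity)]
      at hscaled
  rw [← hL hw, ← hL hz]
  exact (LinearMap.norm_map_iff_inner_map_map (fderiv ℂ Φ 0)).mp hLnorm w z

end Cartan

lemma one_sub_inner_map_map_mul {φ ψ : E → E} (hφ : DifferentiableOn ℂ φ (ball 0 1))
    (hψ : DifferentiableOn ℂ ψ (ball 0 1)) (mφ : MapsTo φ (ball 0 1) (ball 0 1))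
    (mψ : MapsTo ψ (ball 0 1) (ball 0 1)) (hinv : LeftInvOn ψ φ (ball 0 1))
    (ha : ‖a‖ < 1) (hφa : φ a = 0) (hw : ‖w‖ < 1) (hz : ‖z‖ < 1) :
    (1 - ⟪φ w, φ z⟫) * ((1 - ⟪w, a⟫) * (1 - ⟪a, z⟫)) = (1 - ⟪a, a⟫) * (1 - ⟪w, z⟫) := by
  have dm := differentiableOn_moebiusInvolution ha
  have mm := mapsTo_moebiusInvolution ha
  have hinv' : LeftInvOn (moebiusInvolution a ∘ ψ) (φ ∘ moebiusInvolution a) (ball 0 1) :=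
    LeftInvOn.comp (fun z hz =>
      moebiusInvolution_moebiusInvolution ha (mem_ball_zero_iff.mp hz).le) hinv mm
  have hinner := inner_map_map_eq_of_norm_map_eq (hφ.comp dm mm)
    (fun z => norm_map_eq_of_map_zero_of_leftInvOn (hφ.comp dm mm) (dm.comp hψ mψ)
      (mφ.comp mm) (mm.comp mψ) (by simp [moebiusInvolution_zero, hφa]) hinv')
    (norm_moebiusInvolution_lt_one ha hw) (norm_moebiusInvolution_lt_one ha hz)
  simp only [Function.comp_apply, moebiusInvolution_moebiusInvolution ha hw.le,
    moebiusInvolution_moebiusInvolution ha hz.le] at hinner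
  rw [hinner, one_sub_inner_moebiusInvolution_mul ha hw.le hz.le]

end Geometry

section Kernel

variable {E : Type*} [NormedAddCommGroup E] [InnerProductSpace ℂ E] {a w w' z z' : E} {t : ℝ}

/-- The reproducing kernel `K_w(z) = (1 - ⟨z, w⟩)^{-t}` of the unit ball. -/
def ballKernel (t : ℝ) (w z : E) : ℂ := (1 - ⟪w, z⟫) ^ (-(t : ℂ))

lemma ballKernel_zero_left (t : ℝ) (z : E) : ballKernel t 0 z = 1 := by simp [ballKernel]

lemma ballKernel_ne_zero (hw : ‖w‖ < 1) (hz : ‖z‖ ≤ 1) : ballKernel t w z ≠ 0 := by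
  simp [ballKernel, Complex.cpow_eq_zero_iff, one_sub_inner_ne_zero hw hz]

lemma continuousOn_ballKernel (hw : ‖w‖ < 1) :
    ContinuousOn (ballKernel t w) (closedBall 0 1) := by
  refine ContinuousOn.cpow_const (by fun_prop) fun z hz => Or.inl ?_
  exact re_one_sub_inner_pos hw (mem_closedBall_zero_iff.mp hz)

lemma conj_ballKernel (hw : ‖w‖ < 1) (hz : ‖z‖ ≤ 1) :
    starRingEnd ℂ (ballKernel t w z) = ballKernel t z w := by
  have harg : (1 - ⟪w, z⟫).arg ≠ Real.pi := fun h =>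
    (re_one_sub_inner_pos hw hz).not_gt (Complex.arg_eq_pi_iff.mp h).1
  rw [ballKernel, ← Complex.conj_ofReal t, ← map_neg, Complex.cpow_conj _ _ harg]
  simp [ballKernel]

lemma ballKernel_self_eq_norm (ha : ‖a‖ < 1) : ballKernel t a a = ‖ballKernel t a a‖ := by
  have hnonneg : 0 ≤ 1 - ‖a‖ ^ 2 := by nlinarith [norm_nonneg a]
  have hreal : ballKernel t a a = (((1 - ‖a‖ ^ 2) ^ (-t) : ℝ) : ℂ) := by
    rw [ballKernel, one_sub_inner_self, Complex.ofReal_cpow hnonneg, Complex.ofReal_neg]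
  rw [hreal, Complex.norm_of_nonneg (Real.rpow_nonneg hnonneg _)]

/-- Both sides of the hypothesis have arguments adding up to less than `2π` in absolute value, so
the principal logarithms satisfy the logarithmic form of the identity. -/
lemma cpow_mul_cpow_mul_cpow_of_re_pos {x y u v : ℂ} {r : ℝ} (hx : 0 < x.re) (hy : 0 < y.re)
    (hu : 0 < u.re) (hv : 0 < v.re) (hr : 0 < r) (h : x * (y * u) = r * v) (s : ℂ) :
    x ^ s * (y ^ s * u ^ s) = (r : ℂ) ^ s * v ^ s := by
  have hr0 : (r : ℂ) ≠ 0 := Complex.ofReal_ne_zero.mpr hr.ne'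
  have ne_zero {c : ℂ} (hc : 0 < c.re) : c ≠ 0 := Complex.ne_zero_of_re_pos hc
  have harg {c : ℂ} (hc : 0 < c.re) : |c.arg| < Real.pi / 2 :=
    Complex.abs_arg_lt_pi_div_two_iff.mpr (Or.inl hc)
  have hlog : Complex.log x + (Complex.log y + Complex.log u) = Complex.log r + Complex.log v := by
    obtain ⟨n, hn⟩ := Complex.exp_eq_exp_iff_exists_int.mp (show
      Complex.exp (Complex.log x + (Complex.log y + Complex.log u)) =
        Complex.exp (Complex.log r + Complex.log v) by
      simp only [Complex.exp_add, Complex.exp_log, ne_zero, hx, hy, hu, hv, hr0, h, ne_eq,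
        not_false_eq_true])
    have him : x.arg + (y.arg + u.arg) = v.arg + n * (2 * Real.pi) := by
      simpa [Complex.log_im, Complex.arg_ofReal_of_nonneg hr.le] using congrArg Complex.im hn
    have hn_lt : |(n : ℝ)| < 1 := by
      have := abs_lt.mp (harg hx)
      have := abs_lt.mp (harg hy)
      have := abs_lt.mp (harg hu)
      have := abs_lt.mp (harg hv)
      rw [abs_lt]
      constructor <;> nlinarith [Real.pi_pos]
    have hn0 : n = 0 := Int.abs_lt_one_iff.mp (by exact_mod_cast hn_lt)
    simpa [hn0] using hn
  simp only [Complex.cpow_def_of_ne_zero, ne_zero, hx, hy, hu, hv, hr0, ne_eq, not_false_eq_true,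
    ← Complex.exp_add, ← add_mul, hlog]

lemma ballKernel_mul_of_one_sub_inner_mul (ha : ‖a‖ < 1) (hw : ‖w‖ < 1) (hz : ‖z‖ ≤ 1)
    (hw' : ‖w'‖ < 1) (hz' : ‖z'‖ ≤ 1)
    (h : (1 - ⟪w', z'⟫) * ((1 - ⟪w, a⟫) * (1 - ⟪a, z⟫)) = (1 - ⟪a, a⟫) * (1 - ⟪w, z⟫)) :
    ballKernel t w' z' * (ballKernel t w a * ballKernel t a z) =
      ballKernel t a a * ballKernel t w z := by
  have hr : 0 < 1 - ‖a‖ ^ 2 := by nlinarith [norm_nonneg a]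
  rw [one_sub_inner_self] at h
  simpa only [ballKernel, one_sub_inner_self] using cpow_mul_cpow_mul_cpow_of_re_pos
    (re_one_sub_inner_pos hw' hz') (re_one_sub_inner_pos hw ha.le) (re_one_sub_inner_pos ha hz)
    (re_one_sub_inner_pos hw hz) hr h (-(t : ℂ))

/-- The Poisson–Szegő type kernel `|K_a(z)|² / K_a(a)`. An automorphism sending `a` to `0` changes
variables in the inner product with this density. -/
def poissonSzegoKernel (t : ℝ) (a z : E) : NNReal := ‖ballKernel t a z‖₊ ^ 2 / ‖ballKernel t a a‖₊

lemma coe_poissonSzegoKernel (ha : ‖a‖ < 1) (z : E) :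
    ((poissonSzegoKernel t a z : ℝ) : ℂ) =
      ballKernel t a z * starRingEnd ℂ (ballKernel t a z) / ballKernel t a a := by
  rw [Complex.mul_conj', ballKernel_self_eq_norm ha]
  simp [poissonSzegoKernel]

lemma poissonSzegoKernel_ne_zero (ha : ‖a‖ < 1) (hz : ‖z‖ ≤ 1) : poissonSzegoKernel t a z ≠ 0 := by
  simp [poissonSzegoKernel, ballKernel_ne_zero ha hz, ballKernel_ne_zero ha ha.le]

lemma continuousOn_poissonSzegoKernel (ha : ‖a‖ < 1) :
    ContinuousOn (poissonSzegoKernel t a) (closedBall 0 1) :=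
  ((continuousOn_ballKernel ha).nnnorm.pow 2).div_const _

end Kernel

namespace IsBallAutomorphism

variable {N : ℕ} {t : ℝ} {φ : EuclideanSpace ℂ (Fin N) → EuclideanSpace ℂ (Fin N)}
  {a u w z : EuclideanSpace ℂ (Fin N)}

lemma mapsTo_closedBall (hφ : IsBallAutomorphism N φ) (hφc : ContinuousOn φ (closedBall 0 1)) :
    MapsTo φ (closedBall 0 1) (closedBall 0 1) := by
  have := hφ.2.1.closure_of_continuousOn (by simpa [closure_ball] using hφc)
  simpa [closure_ball] using this

lemma norm_map_le_one (hφ : IsBallAutomorphism N φ) (hφc : ContinuousOn φ (closedBall 0 1))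
    (hz : ‖z‖ ≤ 1) : ‖φ z‖ ≤ 1 :=
  mem_closedBall_zero_iff.mp
    (hφ.mapsTo_closedBall hφc (mem_closedBall_zero_iff.mpr hz))

lemma norm_map_lt_one (hφ : IsBallAutomorphism N φ) (hz : ‖z‖ < 1) : ‖φ z‖ < 1 :=
  mem_ball_zero_iff.mp (hφ.2.1 (mem_ball_zero_iff.mpr hz))

lemma surjOn_ball (hφ : IsBallAutomorphism N φ) : SurjOn φ (Ball N) (Ball N) := by
  obtain ⟨-, -, ψ, -, mψ, -, hφψ⟩ := hφ
  exact fun z hz => ⟨ψ z, mψ hz, hφψ z hz⟩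

lemma one_sub_inner_map_map_mul (hφ : IsBallAutomorphism N φ)
    (hφc : ContinuousOn φ (closedBall 0 1)) (ha : ‖a‖ < 1) (hφa : φ a = 0) (hw : ‖w‖ < 1)
    (hz : ‖z‖ ≤ 1) :
    (1 - ⟪φ w, φ z⟫) * ((1 - ⟪w, a⟫) * (1 - ⟪a, z⟫)) = (1 - ⟪a, a⟫) * (1 - ⟪w, z⟫) := by
  obtain ⟨dφ, mφ, ψ, dψ, mψ, hinv, -⟩ := hφ
  have hball : EqOn (fun z => (1 - ⟪φ w, φ z⟫) * ((1 - ⟪w, a⟫) * (1 - ⟪a, z⟫)))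
      (fun z => (1 - ⟪a, a⟫) * (1 - ⟪w, z⟫)) (ball 0 1) := fun z hz =>
    _root_.one_sub_inner_map_map_mul dφ dψ mφ mψ hinv ha hφa hw (mem_ball_zero_iff.mp hz)
  exact hball.of_subset_closure (by fun_prop) (by fun_prop) ball_subset_closedBall
    (closure_ball _ one_ne_zero).ge (mem_closedBall_zero_iff.mpr hz)

lemma ballKernel_map_map_mul (hφ : IsBallAutomorphism N φ)
    (hφc : ContinuousOn φ (closedBall 0 1)) (ha : ‖a‖ < 1) (hφa : φ a = 0) (hw : ‖w‖ < 1)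
    (hz : ‖z‖ ≤ 1) :
    ballKernel t (φ w) (φ z) * (ballKernel t w a * ballKernel t a z) =
      ballKernel t a a * ballKernel t w z :=
  ballKernel_mul_of_one_sub_inner_mul ha hw hz (hφ.norm_map_lt_one hw) (hφ.norm_map_le_one hφc hz)
    (hφ.one_sub_inner_map_map_mul hφc ha hφa hw hz)

lemma inv_ballKernel_mul_ballKernel (hφ : IsBallAutomorphism N φ)
    (hφc : ContinuousOn φ (closedBall 0 1)) (ha : ‖a‖ < 1) (hφa : φ a = 0) (hu : ‖u‖ < 1)
    (hz : ‖z‖ ≤ 1) :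
    (ballKernel t a z)⁻¹ * ballKernel t u z =
      ballKernel t u a / ballKernel t a a * ballKernel t (φ u) (φ z) := by
  have haa := ballKernel_ne_zero (t := t) ha ha.le
  have haz := ballKernel_ne_zero (t := t) ha hz
  field_simp
  linear_combination -hφ.ballKernel_map_map_mul (t := t) hφc ha hφa hu hz

lemma poissonSzegoKernel_mul_ballKernel_map (hφ : IsBallAutomorphism N φ)
    (hφc : ContinuousOn φ (closedBall 0 1)) (ha : ‖a‖ < 1) (hφa : φ a = 0) (hw : ‖w‖ < 1)
    (hu : ‖u‖ < 1) (hz : ‖z‖ ≤ 1) :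
    ((poissonSzegoKernel t a z : ℝ) : ℂ) *
        (starRingEnd ℂ (ballKernel t (φ w) (φ z)) * ballKernel t (φ u) (φ z)) =
      ballKernel t a a / (ballKernel t a w * ballKernel t u a) *
        (starRingEnd ℂ (ballKernel t w z) * ballKernel t u z) := by
  have hKu := hφ.ballKernel_map_map_mul (t := t) hφc ha hφa hu hz
  have hKw := congrArg (starRingEnd ℂ) (hφ.ballKernel_map_map_mul (t := t) hφc ha hφa hw hz)
  simp only [map_mul, conj_ballKernel hw ha.le, conj_ballKernel ha ha.le] at hKw
  have haa := ballKernel_ne_zero (t := t) ha ha.le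
  have haw := ballKernel_ne_zero (t := t) ha hw.le
  have hua := ballKernel_ne_zero (t := t) hu ha.le
  rw [coe_poissonSzegoKernel ha]
  field_simp
  linear_combination congrArg₂ (· * ·) hKu hKw

end IsBallAutomorphism

section MeasureDetermination

section PowerSeries

variable {α : Type*} [MeasurableSpace α] {ν ν' : Measure α} {x h : α → ℂ} {R : NNReal}
  {F : ℂ → ℂ} {p : FormalMultilinearSeries ℂ ℂ ℂ} {r : ENNReal} {s : ℂ}

lemma integrable_pow_mul (hx : AEStronglyMeasurable x ν) (hxR : ∀ᵐ y ∂ν, ‖x y‖₊ ≤ R)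
    (hh : Integrable h ν) (m : ℕ) : Integrable (fun y => x y ^ m * h y) ν := by
  refine hh.bdd_mul (hx.pow m) (c := R ^ m) ?_
  filter_upwards [hxR] with y hy
  rw [norm_pow]
  gcongr
  exact hy

lemma hasSum_integral_powerSeries_mul (hF : HasFPowerSeriesOnBall F p 0 r)
    (hx : AEStronglyMeasurable x ν) (hxR : ∀ᵐ y ∂ν, ‖x y‖₊ ≤ R) (hh : Integrable h ν)
    (hs : ((‖s‖₊ * R : NNReal) : ENNReal) < r) :
    HasSum (fun m => s ^ m * (p.coeff m * ∫ y, x y ^ m * h y ∂ν))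
      (∫ y, F (s * x y) * h y ∂ν) := by
  have hterm (m : ℕ) : Integrable (fun y => s ^ m * p.coeff m * (x y ^ m * h y)) ν :=
    (integrable_pow_mul hx hxR hh m).const_mul _
  have hsummable : Summable fun m => ∫ y, ‖s ^ m * p.coeff m * (x y ^ m * h y)‖ ∂ν := by
    have hcoeff := p.summable_norm_mul_pow (hs.trans_le hF.r_le)
    refine Summable.of_nonneg_of_le (fun m => by positivity) (fun m => ?_)
      (hcoeff.mul_right (∫ y, ‖h y‖ ∂ν))
    rw [← integral_const_mul]
    refine integral_mono_ae (hterm m).norm (hh.norm.const_mul _) ?_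
    filter_upwards [hxR] with y hy
    have hy' : ‖x y‖ ^ m ≤ (R : ℝ) ^ m := by gcongr; exact hy
    calc ‖s ^ m * p.coeff m * (x y ^ m * h y)‖
        = ‖p m‖ * ‖s‖ ^ m * (‖x y‖ ^ m * ‖h y‖) := by
          simp [FormalMultilinearSeries.norm_apply_eq_norm_coef, mul_comm]
      _ ≤ ‖p m‖ * ‖s‖ ^ m * ((R : ℝ) ^ m * ‖h y‖) := by gcongr
      _ = ‖p m‖ * ((‖s‖₊ * R : NNReal) : ℝ) ^ m * ‖h y‖ := by push_cast; ring
  have hsum := hasSum_integral_of_summable_integral_norm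
    (F := fun m y => s ^ m * p.coeff m * (x y ^ m * h y)) hterm hsummable
  simp only [integral_const_mul, mul_assoc] at hsum
  suffices hint : ∀ᵐ y ∂ν,
      F (s * x y) * h y = ∑' m, s ^ m * (p.coeff m * (x y ^ m * h y)) by
    rwa [integral_congr_ae hint]
  filter_upwards [hxR] with y hy
  have hmem : s * x y ∈ eball (0 : ℂ) r := by
    rw [mem_eball_zero_iff, enorm_eq_nnnorm, nnnorm_mul]
    refine lt_of_le_of_lt ?_ hs
    gcongr
  have hFs := (hF.hasSum hmem).mul_right (h y)
  simp only [FormalMultilinearSeries.apply_eq_pow_smul_coeff, smul_eq_mul, zero_add, mul_pow] at hFs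
  rw [← hFs.tsum_eq]
  exact tsum_congr fun m => by ring

lemma eq_zero_of_eventually_hasSum_zero {d : ℕ → ℂ}
    (hd : ∀ᶠ s : ℂ in 𝓝 0, HasSum (fun m => s ^ m * d m) 0) (m : ℕ) : d m = 0 := by
  have hseries : HasFPowerSeriesAt (fun _ : ℂ => (0 : ℂ)) (.ofScalars ℂ d) 0 :=
    hasFPowerSeriesAt_iff.mpr (by simpa [FormalMultilinearSeries.coeff_ofScalars] using hd)
  rw [← FormalMultilinearSeries.coeff_ofScalars (p := d), hseries.eq_zero]
  rfl

lemma integral_pow_mul_eq_of_eventually_integral_powerSeries_mul_eq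
    (hF : HasFPowerSeriesOnBall F p 0 r) (hp : ∀ m, p.coeff m ≠ 0)
    (hx : AEStronglyMeasurable x ν) (hxR : ∀ᵐ y ∂ν, ‖x y‖₊ ≤ R) (hh : Integrable h ν)
    (hx' : AEStronglyMeasurable x ν') (hxR' : ∀ᵐ y ∂ν', ‖x y‖₊ ≤ R) (hh' : Integrable h ν')
    (heq : ∀ᶠ s in 𝓝 0, ∫ y, F (s * x y) * h y ∂ν = ∫ y, F (s * x y) * h y ∂ν') (m : ℕ) :
    ∫ y, x y ^ m * h y ∂ν = ∫ y, x y ^ m * h y ∂ν' := by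
  have hsmall : ∀ᶠ s : ℂ in 𝓝 0, ((‖s‖₊ * R : NNReal) : ENNReal) < r := by
    have hcont : Continuous fun s : ℂ => ((‖s‖₊ * R : NNReal) : ENNReal) := by fun_prop
    exact hcont.tendsto' 0 0 (by simp) |>.eventually_lt_const hF.r_pos
  have hdiff : p.coeff m * ((∫ y, x y ^ m * h y ∂ν) - ∫ y, x y ^ m * h y ∂ν') = 0 := by
    refine eq_zero_of_eventually_hasSum_zero (d := fun m => p.coeff m *
      ((∫ y, x y ^ m * h y ∂ν) - ∫ y, x y ^ m * h y ∂ν')) ?_ m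
    filter_upwards [hsmall, heq] with s hs hs_eq
    simpa [hs_eq, mul_sub] using (hasSum_integral_powerSeries_mul hF hx hxR hh hs).sub
      (hasSum_integral_powerSeries_mul hF hx' hxR' hh' hs)
  exact sub_eq_zero.mp ((mul_eq_zero.mp hdiff).resolve_left (hp m))

lemma integral_exp_mul_eq_of_integral_pow_mul_eq
    (hx : AEStronglyMeasurable x ν) (hxR : ∀ᵐ y ∂ν, ‖x y‖₊ ≤ R) (hh : Integrable h ν)
    (hx' : AEStronglyMeasurable x ν') (hxR' : ∀ᵐ y ∂ν', ‖x y‖₊ ≤ R) (hh' : Integrable h ν')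
    (heq : ∀ m : ℕ, ∫ y, x y ^ m * h y ∂ν = ∫ y, x y ^ m * h y ∂ν') (s : ℂ) :
    ∫ y, Complex.exp (s * x y) * h y ∂ν = ∫ y, Complex.exp (s * x y) * h y ∂ν' := by
  have hF : HasFPowerSeriesOnBall Complex.exp (NormedSpace.expSeries ℂ ℂ) 0 ⊤ := by
    rw [Complex.exp_eq_exp_ℂ]
    exact NormedSpace.exp_hasFPowerSeriesOnBall
  have hsum := hasSum_integral_powerSeries_mul (s := s) hF hx hxR hh ENNReal.coe_lt_top
  simp only [heq] at hsum
  exact hsum.unique (hasSum_integral_powerSeries_mul hF hx' hxR' hh' ENNReal.coe_lt_top)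

end PowerSeries

section UnitBall

variable {E : Type*} [NormedAddCommGroup E] [MeasurableSpace E] {ν ν' : Measure E}
  {b g h : E → ℂ} {t : ℝ}

lemma restrict_closedBall_eq_self (hν : ∀ᵐ z ∂ν, ‖z‖ ≤ 1) : ν.restrict (closedBall 0 1) = ν :=
  Measure.restrict_eq_self_of_ae_mem (by simpa using hν)

lemma aemeasurable_of_continuousOn_closedBall [BorelSpace E] {β : Type*} [TopologicalSpace β]
    [MeasurableSpace β] [BorelSpace β] {g : E → β} (hν : ∀ᵐ z ∂ν, ‖z‖ ≤ 1)
    (hg : ContinuousOn g (closedBall 0 1)) : AEMeasurable g ν := by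
  rw [← restrict_closedBall_eq_self hν]
  exact hg.aemeasurable isClosed_closedBall.measurableSet

lemma integrable_of_continuousOn_closedBall [ProperSpace E] [BorelSpace E] [IsFiniteMeasure ν]
    {F : Type*} [NormedAddCommGroup F] {g : E → F} (hν : ∀ᵐ z ∂ν, ‖z‖ ≤ 1)
    (hg : ContinuousOn g (closedBall 0 1)) : Integrable g ν := by
  rw [← restrict_closedBall_eq_self hν]
  exact hg.integrableOn_compact (isCompact_closedBall 0 1)

lemma integrable_mul_of_continuousOn_closedBall [ProperSpace E] [BorelSpace E]
    (hν : ∀ᵐ z ∂ν, ‖z‖ ≤ 1) (hb : Integrable b ν) (hg : ContinuousOn g (closedBall 0 1)) :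
    Integrable (fun z => b z * g z) ν := by
  rw [← restrict_closedBall_eq_self hν]
  exact hb.integrableOn.mul_continuousOn hg (isCompact_closedBall 0 1)

lemma ringChoose_ofReal_add_sub_one_ne_zero (ht : 0 < t) (n : ℕ) :
    Ring.choose ((t : ℂ) + n - 1) n ≠ 0 := by
  have hfactorial : n.factorial • Ring.choose (t + n - 1) n = (ascPochhammer ℝ n).eval t := by
    rw [Ring.choose, ← Polynomial.ascPochhammer_smeval_eq_eval,
      Ring.factorial_nsmul_multichoose_eq_ascPochhammer]
    ring_nf
  have hreal : Ring.choose (t + n - 1) n ≠ 0 := fun h0 =>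
    (ascPochhammer_pos n t ht).ne' (by rw [← hfactorial, h0, smul_zero])
  have := Complex.ofReal_ne_zero.mpr hreal
  rwa [Complex.ofReal_choose, Complex.ofReal_sub, Complex.ofReal_add, Complex.ofReal_natCast,
    Complex.ofReal_one] at this

variable [InnerProductSpace ℂ E]

lemma ae_nnnorm_inner_le (hν : ∀ᵐ z ∂ν, ‖z‖ ≤ 1) (p : E) : ∀ᵐ z ∂ν, ‖⟪p, z⟫‖₊ ≤ ‖p‖₊ :=
  hν.mono fun z hz => (norm_inner_le_norm p z).trans (mul_le_of_le_one_right (norm_nonneg p) hz)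

variable [BorelSpace E]

lemma aestronglyMeasurable_inner_left (p : E) :
    AEStronglyMeasurable (fun z => ⟪p, z⟫) ν :=
  (by fun_prop : Continuous fun z : E => ⟪p, z⟫).aestronglyMeasurable

lemma integral_inner_pow_mul_eq_of_integral_ballKernel_mul_eq (ht : 0 < t)
    (hν : ∀ᵐ z ∂ν, ‖z‖ ≤ 1) (hν' : ∀ᵐ z ∂ν', ‖z‖ ≤ 1) (hh : Integrable h ν) (hh' : Integrable h ν')
    (heq : ∀ w, ‖w‖ < 1 → ∫ z, ballKernel t w z * h z ∂ν = ∫ z, ballKernel t w z * h z ∂ν')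
    (p : E) (m : ℕ) : ∫ z, ⟪p, z⟫ ^ m * h z ∂ν = ∫ z, ⟪p, z⟫ ^ m * h z ∂ν' := by
  refine integral_pow_mul_eq_of_eventually_integral_powerSeries_mul_eq
    (Complex.one_div_one_sub_cpow_hasFPowerSeriesOnBall_zero t) (fun n => ?_)
    (aestronglyMeasurable_inner_left p) (ae_nnnorm_inner_le hν p) hh
    (aestronglyMeasurable_inner_left p) (ae_nnnorm_inner_le hν' p) hh' ?_ m
  · rw [FormalMultilinearSeries.coeff_ofScalars]
    exact ringChoose_ofReal_add_sub_one_ne_zero ht n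
  · have hsmall : ∀ᶠ s : ℂ in 𝓝 0, ‖starRingEnd ℂ s • p‖ < 1 := by
      have hcont : Continuous fun s : ℂ => ‖starRingEnd ℂ s • p‖ := by fun_prop
      exact hcont.tendsto' 0 0 (by simp) |>.eventually_lt_const one_pos
    filter_upwards [hsmall] with s hs
    simpa [ballKernel, inner_smul_left, Complex.cpow_neg, mul_comm] using heq _ hs

variable [IsFiniteMeasure ν] [IsFiniteMeasure ν'] [ProperSpace E]

/-- The moments give the integrals of `exp (c ⟪p, z⟫) * exp (c * conj ⟪p, z⟫)`, which for
`c = i / 2` are the values of the characteristic function. -/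
theorem measure_eq_of_integral_inner_pow_eq (hν : ∀ᵐ z ∂ν, ‖z‖ ≤ 1) (hν' : ∀ᵐ z ∂ν', ‖z‖ ≤ 1)
    (heq : ∀ (p : E) (m n : ℕ),
      ∫ z, ⟪p, z⟫ ^ m * ⟪z, p⟫ ^ n ∂ν = ∫ z, ⟪p, z⟫ ^ m * ⟪z, p⟫ ^ n ∂ν') :
    ν = ν' := by
  refine Measure.ext_of_charFunDual (funext fun L => ?_)
  obtain ⟨p, hp⟩ : ∃ p : E, ∀ z, (L z : ℂ) = (⟪p, z⟫ + ⟪z, p⟫) / 2 := by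
    refine ⟨(InnerProductSpace.toDual ℂ E).symm (StrongDual.extendRCLike L), fun z => ?_⟩
    rw [← inner_conj_symm z, Complex.add_conj, InnerProductSpace.toDual_symm_apply,
      ← RCLike.re_eq_complex_re, StrongDual.re_extendRCLike_apply]
    push_cast
    ring
  have hmeas (ρ : Measure E) : AEStronglyMeasurable (fun z => ⟪z, p⟫) ρ :=
    (by fun_prop : Continuous fun z : E => ⟪z, p⟫).aestronglyMeasurable
  have hbound {ρ : Measure E} (hρ : ∀ᵐ z ∂ρ, ‖z‖ ≤ 1) : ∀ᵐ z ∂ρ, ‖⟪z, p⟫‖₊ ≤ ‖p‖₊ :=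
    (ae_nnnorm_inner_le hρ p).mono fun z hz => by
      rwa [← NNReal.coe_le_coe, coe_nnnorm, norm_inner_symm]
  have hpow (n : ℕ) : ContinuousOn (fun z => ⟪z, p⟫ ^ n) (closedBall 0 1) := by fun_prop
  have hexp : ContinuousOn (fun z => Complex.exp (Complex.I / 2 * ⟪p, z⟫)) (closedBall 0 1) := by
    fun_prop
  have hexp_pow (n : ℕ) :=
    integral_exp_mul_eq_of_integral_pow_mul_eq (h := fun z => ⟪z, p⟫ ^ n)
      (aestronglyMeasurable_inner_left p) (ae_nnnorm_inner_le hν p)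
      (integrable_of_continuousOn_closedBall hν (hpow n))
      (aestronglyMeasurable_inner_left p) (ae_nnnorm_inner_le hν' p)
      (integrable_of_continuousOn_closedBall hν' (hpow n)) (heq p · n) (Complex.I / 2)
  have hexp_exp := integral_exp_mul_eq_of_integral_pow_mul_eq
    (hmeas ν) (hbound hν) (integrable_of_continuousOn_closedBall hν hexp)
    (hmeas ν') (hbound hν') (integrable_of_continuousOn_closedBall hν' hexp)
    (fun n => by simpa only [mul_comm] using hexp_pow n) (Complex.I / 2)
  simp only [charFunDual_apply, hp]
  convert hexp_exp using 3 with z z <;> rw [← Complex.exp_add] <;> ring_nf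

/-- The pairings of the kernels are power series in the moments, with nonzero coefficients. -/
theorem measure_eq_of_integral_conj_ballKernel_mul_ballKernel_eq (ht : Nontrivial E → 0 < t)
    (hν : ∀ᵐ z ∂ν, ‖z‖ ≤ 1) (hν' : ∀ᵐ z ∂ν', ‖z‖ ≤ 1)
    (heq : ∀ w u, ‖w‖ < 1 → ‖u‖ < 1 →
      ∫ z, starRingEnd ℂ (ballKernel t w z) * ballKernel t u z ∂ν =
        ∫ z, starRingEnd ℂ (ballKernel t w z) * ballKernel t u z ∂ν') : ν = ν' := by
  obtain ⟨s, hs, hKs⟩ : ∃ s : ℝ, 0 < s ∧ (ballKernel s : E → E → ℂ) = ballKernel t := by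
    obtain _ | hE := subsingleton_or_nontrivial E
    · exact ⟨1, one_pos, by ext w z; simp [Subsingleton.elim w 0, ballKernel_zero_left]⟩
    · exact ⟨t, ht hE, rfl⟩
  rw [← hKs] at heq
  have hmoment (w : E) (hw : ‖w‖ < 1) (p : E) (m : ℕ) :
      ∫ z, ⟪p, z⟫ ^ m * starRingEnd ℂ (ballKernel s w z) ∂ν =
        ∫ z, ⟪p, z⟫ ^ m * starRingEnd ℂ (ballKernel s w z) ∂ν' := by
    have hconj := Complex.continuous_conj.comp_continuousOn (continuousOn_ballKernel (t := s) hw)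
    refine integral_inner_pow_mul_eq_of_integral_ballKernel_mul_eq hs hν hν'
      (integrable_of_continuousOn_closedBall hν hconj)
      (integrable_of_continuousOn_closedBall hν' hconj) (fun u hu => ?_) p m
    simpa only [mul_comm, Function.comp_apply] using heq w u hw hu
  refine measure_eq_of_integral_inner_pow_eq hν hν' fun p m n => ?_
  have hpow : ContinuousOn (fun z => ⟪z, p⟫ ^ n) (closedBall 0 1) := by fun_prop
  refine integral_inner_pow_mul_eq_of_integral_ballKernel_mul_eq hs hν hν'
    (integrable_of_continuousOn_closedBall hν hpow)
    (integrable_of_continuousOn_closedBall hν' hpow) (fun w hw => ?_) p m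
  have hconj := congrArg (starRingEnd ℂ) (hmoment w hw p n)
  simpa only [← integral_conj, map_mul, map_pow, inner_conj_symm, Complex.conj_conj, mul_comm]
    using hconj

end UnitBall

end MeasureDetermination

section Dilation

variable {E : Type*} [NormedAddCommGroup E] [NormedSpace ℝ E] {r : ℝ} {z : E}

lemma norm_smul_lt_one (hr : r ∈ Ioo 0 1) (hz : ‖z‖ ≤ 1) : ‖r • z‖ < 1 := by
  rw [norm_smul, Real.norm_of_nonneg hr.1.le]
  exact (mul_le_of_le_one_right hr.1.le hz).trans_lt hr.2

variable [ProperSpace E] [MeasurableSpace E] [BorelSpace E] {μ : Measure E} {b g : E → ℂ}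

lemma tendsto_integral_mul_comp_smul (hμ : ∀ᵐ z ∂μ, ‖z‖ ≤ 1) (hb : Integrable b μ)
    (hg : ContinuousOn g (closedBall 0 1)) :
    Tendsto (fun r : ℝ => ∫ z, b z * g (r • z) ∂μ) (𝓝[<] 1) (𝓝 (∫ z, b z * g z ∂μ)) := by
  obtain ⟨C, hC⟩ := (isCompact_closedBall _ _).exists_bound_of_continuousOn hg
  have hIoo : ∀ᶠ r : ℝ in 𝓝[<] 1, r ∈ Ioo 0 1 := Ioo_mem_nhdsLT one_pos
  have hmaps {r : ℝ} (hr : r ∈ Ioo 0 1) :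
      MapsTo (r • · : E → E) (closedBall 0 1) (closedBall 0 1) := fun z hz => by
    rw [mem_closedBall_zero_iff] at hz ⊢
    exact (norm_smul_lt_one hr hz).le
  refine tendsto_integral_filter_of_dominated_convergence (fun z => ‖b z‖ * C) ?_ ?_
    (hb.norm.mul_const C) ?_
  · filter_upwards [hIoo] with r hr
    exact (integrable_mul_of_continuousOn_closedBall hμ hb
      (hg.comp (by fun_prop) (hmaps hr))).aestronglyMeasurable
  · filter_upwards [hIoo] with r hr
    filter_upwards [hμ] with z hz
    rw [norm_mul]
    gcongr
    exact hC _ (hmaps hr (mem_closedBall_zero_iff.mpr hz))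
  · filter_upwards [hμ] with z hz
    rw [← mem_closedBall_zero_iff] at hz
    have hgz : ContinuousWithinAt g (closedBall 0 1) ((1 : ℝ) • z) := hg _ (by rwa [one_smul])
    have hsmul : Tendsto (fun r : ℝ => r • z) (𝓝[<] 1) (𝓝[closedBall 0 1] ((1 : ℝ) • z)) :=
      tendsto_nhdsWithin_iff.mpr
        ⟨((by fun_prop : Continuous fun r : ℝ => r • z).tendsto 1).mono_left nhdsWithin_le_nhds,
          hIoo.mono fun r hr => hmaps hr hz⟩
    simpa only [Function.comp_apply, one_smul] using (hgz.tendsto.comp hsmul).const_mul (b z)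

end Dilation

namespace BallFunctionSpace

variable {N : ℕ} {t : ℝ} {μ : Measure (EuclideanSpace ℂ (Fin N))} {S : BallFunctionSpace N t μ}
  {b U V G : EuclideanSpace ℂ (Fin N) → ℂ} {w z : EuclideanSpace ℂ (Fin N)} {u v g : S.H}
  {T : S.H →L[ℂ] S.H} {c : ℂ}

variable (S) in
lemma dense_span_kernel : Dense (Submodule.span ℂ (S.kernel '' Ball N) : Set S.H) := by
  rw [Submodule.dense_iff_topologicalClosure_eq_top, Submodule.topologicalClosure_eq_top_iff,
    Submodule.eq_bot_iff]
  intro g hg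
  refine S.eval_injective g 0 fun z hz => ?_
  rw [← S.reproducing g z hz, ← S.reproducing 0 z hz, inner_zero_right]
  exact hg _ (Submodule.subset_span (mem_image_of_mem _ hz))

lemma continuousLinearMap_ext_kernel {M : Type*} [TopologicalSpace M] [AddCommMonoid M] [Module ℂ M]
    [T2Space M] {A B : S.H →L[ℂ] M} (h : ∀ u ∈ Ball N, A (S.kernel u) = B (S.kernel u)) : A = B :=
  ContinuousLinearMap.ext_on S.dense_span_kernel (forall_mem_image.mpr h)

lemma eval_apply_eq_mul_of_kernel (hz : z ∈ Ball N)
    (h : ∀ u ∈ Ball N, S.eval (T (S.kernel u)) z = c * S.eval (S.kernel u) z) (g : S.H) :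
    S.eval (T g) z = c * S.eval g z := by
  have hext : innerSL ℂ (S.kernel z) ∘L T = c • innerSL ℂ (S.kernel z) :=
    continuousLinearMap_ext_kernel fun u hu => by simpa [S.reproducing _ z hz] using h u hu
  simpa [S.reproducing _ z hz] using congrArg (· g) hext

/-- The holomorphic function `eval u` on the open ball extends continuously to the closed ball, with
extension `U`; for such functions the dilated pairings of `S` become integrals of `U` itself. -/
def ExtendsTo (S : BallFunctionSpace N t μ) (u : S.H) (U : EuclideanSpace ℂ (Fin N) → ℂ) : Prop :=
  ContinuousOn U (closedBall 0 1) ∧ ∀ z ∈ Ball N, S.eval u z = U z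

lemma extendsTo_kernel (hw : w ∈ Ball N) : S.ExtendsTo (S.kernel w) (ballKernel t w) :=
  ⟨continuousOn_ballKernel (mem_ball_zero_iff.mp hw), S.eval_kernel w hw⟩

lemma ExtendsTo.smul (hu : S.ExtendsTo u U) (c : ℂ) : S.ExtendsTo (c • u) (c • U) :=
  ⟨hu.1.const_smul c, fun z hz => by simp [S.eval_smul, hu.2 z hz]⟩

lemma isToeplitzOperator_id : S.IsToeplitzOperator 1 (.id ℂ S.H) := fun u v => by
  simpa using S.inner_eq v u

lemma IsToeplitzOperator.inner_eq_integral (hμ : ∀ᵐ z ∂μ, ‖z‖ ≤ 1) (hT : S.IsToeplitzOperator b T)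
    (hb : Integrable b μ) (hu : S.ExtendsTo u U) (hv : S.ExtendsTo v V) :
    ⟪v, T u⟫ = ∫ z, starRingEnd ℂ (V z) * b z * U z ∂μ := by
  have hlim := tendsto_integral_mul_comp_smul (g := fun z => starRingEnd ℂ (V z) * U z) hμ hb
    ((Complex.continuous_conj.comp_continuousOn hv.1).mul hu.1)
  have hdilate : ∀ᶠ r : ℝ in 𝓝[<] 1,
      ∫ z, b z * (starRingEnd ℂ (V (r • z)) * U (r • z)) ∂μ =
        ∫ z, starRingEnd ℂ (S.eval v (r • z)) * b z * S.eval u (r • z) ∂μ := by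
    filter_upwards [Ioo_mem_nhdsLT one_pos] with r hr
    refine integral_congr_ae ?_
    filter_upwards [hμ] with z hz
    have hrz : r • z ∈ Ball N := mem_ball_zero_iff.mpr (norm_smul_lt_one hr hz)
    rw [hu.2 _ hrz, hv.2 _ hrz]
    ring
  rw [tendsto_nhds_unique (hT u v) (hlim.congr' hdilate)]
  exact integral_congr_ae (.of_forall fun z => by ring)

variable [IsFiniteMeasure μ]

lemma ExtendsTo.inner_eq_integral (hv : S.ExtendsTo v V) (hu : S.ExtendsTo u U)
    (hμ : ∀ᵐ z ∂μ, ‖z‖ ≤ 1) :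
    ⟪v, u⟫ = ∫ z, starRingEnd ℂ (V z) * U z ∂μ := by
  simpa using isToeplitzOperator_id.inner_eq_integral hμ (integrable_const 1) hu hv

lemma integral_conj_ballKernel_mul_ballKernel (S : BallFunctionSpace N t μ)
    (hμ : ∀ᵐ z ∂μ, ‖z‖ ≤ 1) (hw : w ∈ Ball N) (hz : z ∈ Ball N) :
    ∫ x, starRingEnd ℂ (ballKernel t w x) * ballKernel t z x ∂μ = ballKernel t z w := by
  rw [← (extendsTo_kernel (S := S) hw).inner_eq_integral (extendsTo_kernel hz) hμ,
    S.reproducing _ w hw, (extendsTo_kernel hz).2 w hw]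

lemma IsToeplitzOperator.apply_eq (hμ : ∀ᵐ z ∂μ, ‖z‖ ≤ 1) (hT : S.IsToeplitzOperator b T)
    (hb : Integrable b μ) (hu : S.ExtendsTo u U) (hg : S.ExtendsTo g G)
    (hbU : ∀ᵐ z ∂μ, b z * U z = G z) : T u = g := by
  refine S.eval_injective _ _ fun w hw => ?_
  rw [← S.reproducing _ w hw, ← S.reproducing _ w hw,
    hT.inner_eq_integral hμ hb hu (extendsTo_kernel hw),
    (extendsTo_kernel hw).inner_eq_integral hg hμ]
  refine integral_congr_ae ?_
  filter_upwards [hbU] with z hz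
  rw [mul_assoc, hz]

end BallFunctionSpace

namespace IsBallAutomorphism

variable {N : ℕ} {t : ℝ} {μ : Measure (EuclideanSpace ℂ (Fin N))}
  {φ : EuclideanSpace ℂ (Fin N) → EuclideanSpace ℂ (Fin N)} {f : EuclideanSpace ℂ (Fin N) → ℂ}
  {a u w : EuclideanSpace ℂ (Fin N)}

lemma integral_poissonSzegoKernel_smul_ballKernel_map (hφ : IsBallAutomorphism N φ)
    (hφc : ContinuousOn φ (closedBall 0 1)) (ha : ‖a‖ < 1) (hφa : φ a = 0)
    (hμ : ∀ᵐ z ∂μ, ‖z‖ ≤ 1) (hw : ‖w‖ < 1) (hu : ‖u‖ < 1) (b : EuclideanSpace ℂ (Fin N) → ℂ) :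
    ∫ z, poissonSzegoKernel t a z •
        (starRingEnd ℂ (ballKernel t (φ w) (φ z)) * b z * ballKernel t (φ u) (φ z)) ∂μ =
      ballKernel t a a / (ballKernel t a w * ballKernel t u a) *
        ∫ z, starRingEnd ℂ (ballKernel t w z) * b z * ballKernel t u z ∂μ := by
  rw [← integral_const_mul]
  refine integral_congr_ae ?_
  filter_upwards [hμ] with z hz
  rw [NNReal.smul_def, Complex.real_smul]
  linear_combination b z * hφ.poissonSzegoKernel_mul_ballKernel_map (t := t) hφc ha hφa hw hu hz

variable [IsFiniteMeasure μ]

lemma integral_poissonSzegoKernel_smul_ballKernel_map_eq (hφ : IsBallAutomorphism N φ)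
    (hφc : ContinuousOn φ (closedBall 0 1)) (ha : ‖a‖ < 1) (hφa : φ a = 0)
    (hμ : ∀ᵐ z ∂μ, ‖z‖ ≤ 1) (S : BallFunctionSpace N t μ) (hw : ‖w‖ < 1) (hu : ‖u‖ < 1) :
    ∫ z, poissonSzegoKernel t a z •
        (starRingEnd ℂ (ballKernel t (φ w) (φ z)) * ballKernel t (φ u) (φ z)) ∂μ =
      ballKernel t (φ u) (φ w) := by
  have hmap := hφ.integral_poissonSzegoKernel_smul_ballKernel_map (t := t) hφc ha hφa hμ hw hu 1
  simp only [Pi.one_apply, mul_one, S.integral_conj_ballKernel_mul_ballKernel hμ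
    (mem_ball_zero_iff.mpr hw) (mem_ball_zero_iff.mpr hu)] at hmap
  rw [hmap, div_mul_eq_mul_div, div_eq_iff (mul_ne_zero (ballKernel_ne_zero ha hw.le)
    (ballKernel_ne_zero hu ha.le)), mul_comm (ballKernel t a w),
    hφ.ballKernel_map_map_mul hφc ha hφa hu hw.le]

/-- Both sides have the same pairings of kernels. -/
theorem map_withDensity_poissonSzegoKernel (hφ : IsBallAutomorphism N φ)
    (hφc : ContinuousOn φ (closedBall 0 1)) (ha : ‖a‖ < 1) (hφa : φ a = 0)
    (ht : N ≠ 0 → 0 < t) (hμ : ∀ᵐ z ∂μ, ‖z‖ ≤ 1) (S : BallFunctionSpace N t μ) :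
    (μ.withDensity fun z => poissonSzegoKernel t a z).map φ = μ := by
  set ν := μ.withDensity fun z => (poissonSzegoKernel t a z : ENNReal) with hν_def
  have hPc := continuousOn_poissonSzegoKernel (t := t) ha
  have hP := aemeasurable_of_continuousOn_closedBall hμ hPc
  have hPint : Integrable (fun z => (poissonSzegoKernel t a z : ℝ)) μ :=
    integrable_of_continuousOn_closedBall hμ (NNReal.continuous_coe.comp_continuousOn hPc)
  have hν : ∀ᵐ z ∂ν, ‖z‖ ≤ 1 := (withDensity_absolutelyContinuous _ _).ae_le hμ
  have hφν : AEMeasurable φ ν := aemeasurable_of_continuousOn_closedBall hν hφc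
  have hφν_ball : ∀ᵐ z ∂ν.map φ, ‖z‖ ≤ 1 :=
    (ae_map_iff hφν (measurableSet_le measurable_norm measurable_const)).mpr
      (hν.mono fun z hz => hφ.norm_map_le_one hφc hz)
  have : IsFiniteMeasure ν := by
    simpa using isFiniteMeasure_withDensity_ofReal hPint.2
  refine measure_eq_of_integral_conj_ballKernel_mul_ballKernel_eq (t := t)
    (fun h => ht fun hN => ?_) hφν_ball hμ fun w u hw hu => ?_
  · subst hN
    exact not_subsingleton (EuclideanSpace ℂ (Fin 0)) inferInstance
  obtain ⟨w, hw', rfl⟩ := hφ.surjOn_ball (mem_ball_zero_iff.mpr hw)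
  obtain ⟨u, hu', rfl⟩ := hφ.surjOn_ball (mem_ball_zero_iff.mpr hu)
  have hpair : ContinuousOn (fun z => starRingEnd ℂ (ballKernel t (φ w) z) * ballKernel t (φ u) z)
      (closedBall 0 1) :=
    (Complex.continuous_conj.comp_continuousOn (continuousOn_ballKernel hw)).mul
      (continuousOn_ballKernel hu)
  rw [S.integral_conj_ballKernel_mul_ballKernel hμ (mem_ball_zero_iff.mpr hw)
    (mem_ball_zero_iff.mpr hu), integral_map hφν
    (integrable_of_continuousOn_closedBall hφν_ball hpair).aestronglyMeasurable,
    integral_withDensity_eq_integral_smul₀ hP]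
  exact hφ.integral_poissonSzegoKernel_smul_ballKernel_map_eq hφc ha hφa hμ S
    (mem_ball_zero_iff.mp hw') (mem_ball_zero_iff.mp hu')

lemma integral_poissonSzegoKernel_smul_comp (hφ : IsBallAutomorphism N φ)
    (hφc : ContinuousOn φ (closedBall 0 1)) (ha : ‖a‖ < 1) (hφa : φ a = 0)
    (ht : N ≠ 0 → 0 < t) (hμ : ∀ᵐ z ∂μ, ‖z‖ ≤ 1) (S : BallFunctionSpace N t μ)
    (hf : AEStronglyMeasurable f μ) :
    ∫ z, poissonSzegoKernel t a z • f (φ z) ∂μ = ∫ z, f z ∂μ := by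
  have hmap := hφ.map_withDensity_poissonSzegoKernel hφc ha hφa ht hμ S
  rw [← integral_withDensity_eq_integral_smul₀
    (aemeasurable_of_continuousOn_closedBall hμ (continuousOn_poissonSzegoKernel ha))]
  conv_rhs => rw [← hmap]
  refine (integral_map (aemeasurable_of_continuousOn_closedBall
    ((withDensity_absolutelyContinuous _ _).ae_le hμ) hφc) ?_).symm
  rwa [hmap]

lemma integrable_comp (hφ : IsBallAutomorphism N φ) (hφc : ContinuousOn φ (closedBall 0 1))
    (ha : ‖a‖ < 1) (hφa : φ a = 0) (ht : N ≠ 0 → 0 < t) (hμ : ∀ᵐ z ∂μ, ‖z‖ ≤ 1)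
    (S : BallFunctionSpace N t μ) (hf : Integrable f μ) : Integrable (f ∘ φ) μ := by
  have hP := continuousOn_poissonSzegoKernel (t := t) ha
  rw [← hφ.map_withDensity_poissonSzegoKernel hφc ha hφa ht hμ S] at hf
  have hφP : AEMeasurable φ (μ.withDensity fun z => poissonSzegoKernel t a z) :=
    aemeasurable_of_continuousOn_closedBall ((withDensity_absolutelyContinuous _ _).ae_le hμ) hφc
  have hweighted := (integrable_withDensity_iff_integrable_smul₀
    (aemeasurable_of_continuousOn_closedBall hμ hP)).mp (hf.comp_aemeasurable hφP)
  have hPinv : ContinuousOn (fun z => (((poissonSzegoKernel t a z)⁻¹ : NNReal) : ℂ))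
      (closedBall 0 1) :=
    (by fun_prop : Continuous fun x : NNReal => (x : ℂ)).comp_continuousOn
      (hP.inv₀ fun z hz => poissonSzegoKernel_ne_zero ha (mem_closedBall_zero_iff.mp hz))
  refine (integrable_mul_of_continuousOn_closedBall hμ hweighted hPinv).congr ?_
  filter_upwards [hμ] with z hz
  have hPz := poissonSzegoKernel_ne_zero (t := t) ha hz
  rw [mul_comm, NNReal.smul_def, Complex.real_smul, NNReal.coe_inv, Complex.ofReal_inv,
    inv_mul_cancel_left₀ (by exact_mod_cast hPz)]

end IsBallAutomorphism

namespace BallFunctionSpace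

variable {N : ℕ} {t : ℝ} {μ : Measure (EuclideanSpace ℂ (Fin N))} {S : BallFunctionSpace N t μ}
  {φ : EuclideanSpace ℂ (Fin N) → EuclideanSpace ℂ (Fin N)}
  {f V : EuclideanSpace ℂ (Fin N) → ℂ} {a u w z : EuclideanSpace ℂ (Fin N)} {v : S.H}
  {Cφ Tf Tfφ TK TKinv : S.H →L[ℂ] S.H}

lemma IsCompositionOperator.extendsTo (hCφ : S.IsCompositionOperator φ Cφ)
    (hφ : IsBallAutomorphism N φ) (hφc : ContinuousOn φ (closedBall 0 1))
    (hv : S.ExtendsTo v V) : S.ExtendsTo (Cφ v) (V ∘ φ) :=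
  ⟨hv.1.comp hφc (hφ.mapsTo_closedBall hφc), fun z hz => by
    rw [hCφ v z hz, hv.2 _ (hφ.2.1 hz), Function.comp_apply]⟩

variable [IsFiniteMeasure μ]

lemma IsCompositionOperator.toeplitz_ballKernel_apply_kernel_map
    (hCφ : S.IsCompositionOperator φ Cφ) (hφ : IsBallAutomorphism N φ)
    (hφc : ContinuousOn φ (closedBall 0 1)) (ha : ‖a‖ < 1) (hφa : φ a = 0)
    (hμ : ∀ᵐ z ∂μ, ‖z‖ ≤ 1) (hTK : S.IsToeplitzOperator (ballKernel t a) TK) (hu : u ∈ Ball N) :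
    TK (Cφ (S.kernel (φ u))) = (ballKernel t a a / ballKernel t u a) • S.kernel u := by
  have hKa := integrable_of_continuousOn_closedBall hμ (continuousOn_ballKernel (t := t) ha)
  refine hTK.apply_eq hμ hKa (hCφ.extendsTo hφ hφc (extendsTo_kernel (hφ.2.1 hu)))
    ((extendsTo_kernel hu).smul _) ?_
  rw [mem_ball_zero_iff] at hu
  filter_upwards [hμ] with z hz
  rw [Pi.smul_apply, smul_eq_mul, Function.comp_apply, div_mul_eq_mul_div,
    eq_div_iff (ballKernel_ne_zero hu ha.le), ← hφ.ballKernel_map_map_mul hφc ha hφa hu hz]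
  ring

lemma IsCompositionOperator.toeplitz_inv_ballKernel_apply_kernel
    (hCφ : S.IsCompositionOperator φ Cφ) (hφ : IsBallAutomorphism N φ)
    (hφc : ContinuousOn φ (closedBall 0 1)) (ha : ‖a‖ < 1) (hφa : φ a = 0)
    (hμ : ∀ᵐ z ∂μ, ‖z‖ ≤ 1)
    (hTKinv : S.IsToeplitzOperator (fun z => (ballKernel t a z)⁻¹) TKinv) (hu : u ∈ Ball N) :
    TKinv (S.kernel u) = (ballKernel t u a / ballKernel t a a) • Cφ (S.kernel (φ u)) := by
  have hKa : Integrable (fun z => (ballKernel t a z)⁻¹) μ :=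
    integrable_of_continuousOn_closedBall hμ ((continuousOn_ballKernel ha).inv₀ fun z hz =>
      ballKernel_ne_zero ha (mem_closedBall_zero_iff.mp hz))
  refine hTKinv.apply_eq hμ hKa (extendsTo_kernel hu)
    ((hCφ.extendsTo hφ hφc (extendsTo_kernel (hφ.2.1 hu))).smul _) ?_
  rw [mem_ball_zero_iff] at hu
  filter_upwards [hμ] with z hz
  exact hφ.inv_ballKernel_mul_ballKernel hφc ha hφa hu hz

/-- The Toeplitz operator agrees with the multiplication operator on kernels, which span a dense
subspace. -/
lemma IsCompositionOperator.eval_toeplitz_inv_ballKernel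
    (hCφ : S.IsCompositionOperator φ Cφ) (hφ : IsBallAutomorphism N φ)
    (hφc : ContinuousOn φ (closedBall 0 1)) (ha : ‖a‖ < 1) (hφa : φ a = 0)
    (hμ : ∀ᵐ z ∂μ, ‖z‖ ≤ 1)
    (hTKinv : S.IsToeplitzOperator (fun z => (ballKernel t a z)⁻¹) TKinv) (hz : z ∈ Ball N)
    (v : S.H) : S.eval (TKinv v) z = (ballKernel t a z)⁻¹ * S.eval v z := by
  refine eval_apply_eq_mul_of_kernel hz (fun u hu => ?_) v
  rw [hCφ.toeplitz_inv_ballKernel_apply_kernel hφ hφc ha hφa hμ hTKinv hu, S.eval_smul, hCφ _ z hz,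
    (extendsTo_kernel (hφ.2.1 hu)).2 _ (hφ.2.1 hz), (extendsTo_kernel hu).2 z hz]
  rw [mem_ball_zero_iff] at hu hz
  exact (hφ.inv_ballKernel_mul_ballKernel hφc ha hφa hu hz.le).symm

lemma IsToeplitzOperator.inner_kernel_map (hTf : S.IsToeplitzOperator f Tf)
    (hTfφ : S.IsToeplitzOperator (f ∘ φ) Tfφ) (hφ : IsBallAutomorphism N φ)
    (hφc : ContinuousOn φ (closedBall 0 1)) (ha : ‖a‖ < 1) (hφa : φ a = 0) (ht : N ≠ 0 → 0 < t)
    (hμ : ∀ᵐ z ∂μ, ‖z‖ ≤ 1) (hf : Integrable f μ) (hw : w ∈ Ball N) (hu : u ∈ Ball N) :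
    ⟪S.kernel (φ w), Tf (S.kernel (φ u))⟫ =
      ballKernel t a a / (ballKernel t a w * ballKernel t u a) *
        ⟪S.kernel w, Tfφ (S.kernel u)⟫ := by
  have hfφ := hφ.integrable_comp hφc ha hφa ht hμ S hf
  have hKw := extendsTo_kernel (S := S) (hφ.2.1 hw)
  have hKu := extendsTo_kernel (S := S) (hφ.2.1 hu)
  have hconjKw := Complex.continuous_conj.comp_continuousOn hKw.1
  have hpair : Integrable (fun z => starRingEnd ℂ (ballKernel t (φ w) z) * f z *
      ballKernel t (φ u) z) μ := by
    refine integrable_mul_of_continuousOn_closedBall hμ ?_ hKu.1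
    simpa only [mul_comm (f _), Function.comp_apply] using
      integrable_mul_of_continuousOn_closedBall hμ hf hconjKw
  rw [hTf.inner_eq_integral hμ hf hKu hKw,
    hTfφ.inner_eq_integral hμ hfφ (extendsTo_kernel hu) (extendsTo_kernel hw),
    ← hφ.integral_poissonSzegoKernel_smul_comp hφc ha hφa ht hμ S hpair.aestronglyMeasurable]
  exact hφ.integral_poissonSzegoKernel_smul_ballKernel_map hφc ha hφa hμ
    (mem_ball_zero_iff.mp hw) (mem_ball_zero_iff.mp hu) _

end BallFunctionSpace

theorem composition_toeplitz_conjugation_hardy_general {N : ℕ} {t : ℝ} (ht : N ≠ 0 → 0 < t)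
    {μ : Measure (EuclideanSpace ℂ (Fin N))} [IsFiniteMeasure μ] (hμ : ∀ᵐ z ∂μ, ‖z‖ ≤ 1)
    (S : BallFunctionSpace N t μ) {φ : EuclideanSpace ℂ (Fin N) → EuclideanSpace ℂ (Fin N)}
    (hφ : IsBallAutomorphism N φ) (hφc : ContinuousOn φ (closedBall 0 1))
    {a : EuclideanSpace ℂ (Fin N)} (ha : a ∈ Ball N) (hφa : φ a = 0)
    {f : EuclideanSpace ℂ (Fin N) → ℂ} (hf : Integrable f μ) {Cφ Tf Tfφ TK TKinv : S.H →L[ℂ] S.H}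
    (hCφ : S.IsCompositionOperator φ Cφ) (hTf : S.IsToeplitzOperator f Tf)
    (hTfφ : S.IsToeplitzOperator (f ∘ φ) Tfφ) (hTK : S.IsToeplitzOperator (ballKernel t a) TK)
    (hTKinv : S.IsToeplitzOperator (fun z => (ballKernel t a z)⁻¹) TKinv) :
    Cφ.comp Tf = TKinv.comp (Tfφ.comp (TK.comp Cφ)) := by
  rw [mem_ball_zero_iff] at ha
  refine BallFunctionSpace.continuousLinearMap_ext_kernel fun u' hu' => ?_
  obtain ⟨u, hu, rfl⟩ := hφ.surjOn_ball hu'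
  refine S.eval_injective _ _ fun w hw => ?_
  calc S.eval (Cφ (Tf (S.kernel (φ u)))) w
      = ⟪S.kernel (φ w), Tf (S.kernel (φ u))⟫ := by
        rw [hCφ _ w hw, S.reproducing _ _ (hφ.2.1 hw)]
    _ = ballKernel t a a / (ballKernel t a w * ballKernel t u a) *
          ⟪S.kernel w, Tfφ (S.kernel u)⟫ :=
        hTf.inner_kernel_map hTfφ hφ hφc ha hφa ht hμ hf hw hu
    _ = (ballKernel t a w)⁻¹ *
          S.eval (Tfφ ((ballKernel t a a / ballKernel t u a) • S.kernel u)) w := by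
        rw [map_smul, S.eval_smul, S.reproducing _ w hw]
        ring
    _ = S.eval (TKinv (Tfφ (TK (Cφ (S.kernel (φ u)))))) w := by
        rw [hCφ.eval_toeplitz_inv_ballKernel hφ hφc ha hφa hμ hTKinv hw,
          hCφ.toeplitz_ballKernel_apply_kernel_map hφ hφc ha hφa hμ hTK hu]

section SphereMeasure

variable {N : ℕ}

instance : IsFiniteMeasure (sphereMeasure N) := by
  have : IsFiniteMeasure (volume.restrict (Ball N)) :=
    isFiniteMeasure_restrict.mpr measure_ball_lt_top.ne
  have : IsFiniteMeasure (ballMeasure N) := Measure.smul_finite _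
    (ENNReal.inv_ne_top.mpr (measure_ball_pos volume _ one_pos).ne')
  exact inferInstanceAs (IsFiniteMeasure (Measure.map _ (ballMeasure N)))

/-- The radial projection sends `0` to itself, as `0⁻¹ = 0`; for `N = 0` this is the only point. -/
lemma ae_sphereMeasure_mem_insert_zero_sphere :
    ∀ᵐ z ∂sphereMeasure N, z ∈ insert 0 (sphere (0 : EuclideanSpace ℂ (Fin N)) 1) := by
  refine (ae_map_iff (by fun_prop) (isClosed_sphere.measurableSet.insert 0)).mpr
    (.of_forall fun z => ?_)
  obtain rfl | hz := eq_or_ne z 0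
  · exact Or.inl (smul_zero _)
  · exact Or.inr (by simp [norm_smul, hz])

lemma ae_sphereMeasure_norm_le_one : ∀ᵐ z ∂sphereMeasure N, ‖z‖ ≤ 1 := by
  filter_upwards [ae_sphereMeasure_mem_insert_zero_sphere] with z hz
  obtain rfl | hz := hz
  · simp
  · exact (mem_sphere_zero_iff_norm.mp hz).le

lemma integrable_sphereMeasure_of_bddOn_sphere {f : EuclideanSpace ℂ (Fin N) → ℂ}
    (hf : Measurable f) (hfb : ∃ M : ℝ, ∀ z ∈ sphere (0 : EuclideanSpace ℂ (Fin N)) 1, ‖f z‖ ≤ M) :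
    Integrable f (sphereMeasure N) := by
  obtain ⟨M, hM⟩ := hfb
  refine .of_bound hf.aestronglyMeasurable (max M ‖f 0‖) ?_
  filter_upwards [ae_sphereMeasure_mem_insert_zero_sphere] with z hz
  obtain rfl | hz := hz
  · exact le_max_right _ _
  · exact (hM z hz).trans (le_max_left _ _)

end SphereMeasure

/-- Let `φ` be an automorphism of `B_N`, `a = φ⁻¹(0)`, and `f` a bounded
measurable function on `∂B_N`.  On the Hardy space `H²(B_N)` one has the operator identity
`C_φ T_f = T_{1/K_a} T_{f∘φ} T_{K_a} C_φ`, where `K_a(z) = (1 - ⟨z,a⟩)^{-N}` is the Hardy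
reproducing kernel at `a`. -/
theorem composition_toeplitz_conjugation_hardy
    (N : ℕ) (S : BallFunctionSpace N N (sphereMeasure N))
    (φ : EuclideanSpace ℂ (Fin N) → EuclideanSpace ℂ (Fin N))
    (hφ : IsBallAutomorphism N φ)
    (hφc : ContinuousOn φ (Metric.closedBall 0 1))
    (hφs : Set.MapsTo φ (Metric.sphere 0 1) (Metric.sphere 0 1))
    (a : EuclideanSpace ℂ (Fin N)) (ha : a ∈ Ball N) (hφa : φ a = 0)
    (f : EuclideanSpace ℂ (Fin N) → ℂ)
    (hf : Measurable f) (hfb : ∃ M : ℝ, ∀ z ∈ Metric.sphere (0 : EuclideanSpace ℂ (Fin N)) 1, ‖f z‖ ≤ M)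
    (Cφ : S.H →L[ℂ] S.H) (hCφ : S.IsCompositionOperator φ Cφ)
    (Tf Tfφ TK TKinv : S.H →L[ℂ] S.H)
    (hTf : S.IsToeplitzOperator f Tf)
    (hTfφ : S.IsToeplitzOperator (f ∘ φ) Tfφ)
    (hTK : S.IsToeplitzOperator (fun z => (1 - ⟪a, z⟫) ^ (-(N : ℂ))) TK)
    (hTKinv : S.IsToeplitzOperator (fun z => (1 - ⟪a, z⟫) ^ (N : ℂ)) TKinv) :
    Cφ.comp Tf = TKinv.comp (Tfφ.comp (TK.comp Cφ)) := by
  refine composition_toeplitz_conjugation_hardy_general (t := N)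
    (fun hN => Nat.cast_pos.mpr (Nat.pos_of_ne_zero hN)) ae_sphereMeasure_norm_le_one S hφ hφc ha
    hφa (integrable_sphereMeasure_of_bddOn_sphere hf hfb) hCφ hTf hTfφ ?_ ?_
  · simpa +unfoldPartialApp [ballKernel] using hTK
  · simpa [ballKernel, Complex.cpow_neg] using hTKinv
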